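/- Let A be the 3×3 generalized Cartan matrix with rows (2, −1, −3), (−3, 2, −1), (−2, −4, 2), whose principal submatrix A₁₂ is the Cartan matrix of type G₂. Over ℚ, for every n ≥ 0 the homogeneous component of (polynomial) degree n of the subalgebra of ℚ[ω₁,ω₂,ω₃] fixed by both σ₁ and σ₂ has ℚ-dimension equal to the number of triples (a,b,c) of nonnegative integers with a + 2b + 6c = n; i.e. its Hilbert series in polynomial degree is 1/((1−t)(1−t²)(1−t⁶)). -/

import Mathlib

open MvPolynomial

/-- The Cartan matrix with rows `(2,−1,−3)`, `(−3,2,−1)`, `(−2,−4,2)`; its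
principal submatrix `A₁₂` is the Cartan matrix of type `G₂`. -/
def Amat : Matrix (Fin 3) (Fin 3) ℤ := !![2, -1, -3; -3, 2, -1; -2, -4, 2]

/-- The simple root `α_j = a₁ⱼω₁ + a₂ⱼω₂ + a₃ⱼω₃` viewed in `F[ω₁,ω₂,ω₃]`. -/
noncomputable def cartanAlpha (A : Matrix (Fin 3) (Fin 3) ℤ) (F : Type*) [Field F]
    (j : Fin 3) : MvPolynomial (Fin 3) F :=
  ∑ i : Fin 3, (C ((A i j : ℤ) : F)) * X i

/-- The simple reflection `σ_j`. -/
noncomputable def cartanSigma (A : Matrix (Fin 3) (Fin 3) ℤ) (F : Type*) [Field F]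
    (j : Fin 3) : MvPolynomial (Fin 3) F →ₐ[F] MvPolynomial (Fin 3) F :=
  aeval (fun i => if i = j then X j - cartanAlpha A F j else X i)

/-- The subspace of `σ_j`-invariant polynomials. -/
noncomputable def fixedSubmodule (A : Matrix (Fin 3) (Fin 3) ℤ) (F : Type*) [Field F]
    (j : Fin 3) : Submodule F (MvPolynomial (Fin 3) F) :=
  LinearMap.ker ((cartanSigma A F j).toLinearMap - LinearMap.id)


abbrev S3 := MvPolynomial (Fin 3) ℚ

noncomputable def s0 : S3 →ₐ[ℚ] S3 := aeval ![-X 0, X 1, X 2]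
noncomputable def s1 : S3 →ₐ[ℚ] S3 :=
  aeval ![C 2⁻¹ * (3 * X 1 - X 0), C 2⁻¹ * (X 0 + X 1), X 2]
noncomputable def ev0 : S3 →ₐ[ℚ] S3 := aeval ![0, X 1, X 2]
noncomputable def qq : S3 := X 0 ^ 2 + 3 * X 1 ^ 2
noncomputable def pp : S3 := (X 0 * (3 * X 1 - X 0) * (3 * X 1 + X 0)) ^ 2

lemma C_half : (2 : S3) * C 2⁻¹ = 1 := by
  rw [show (2 : S3) = C 2 from (map_ofNat C 2).symm, ← C_mul]; norm_num

@[simp] lemma s0_0 : s0 (X 0) = -X 0 := by simp [s0]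
@[simp] lemma s0_1 : s0 (X 1) = X 1 := by simp [s0]
@[simp] lemma s0_2 : s0 (X 2) = X 2 := by simp [s0]
@[simp] lemma s1_0 : s1 (X 0) = C 2⁻¹ * (3 * X 1 - X 0) := by simp [s1]
@[simp] lemma s1_1 : s1 (X 1) = C 2⁻¹ * (X 0 + X 1) := by simp [s1]
@[simp] lemma s1_2 : s1 (X 2) = X 2 := by simp [s1]
@[simp] lemma ev0_0 : ev0 (X 0) = 0 := by simp [ev0]
@[simp] lemma ev0_1 : ev0 (X 1) = X 1 := by simp [ev0]
@[simp] lemma ev0_2 : ev0 (X 2) = X 2 := by simp [ev0]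
@[simp] lemma s1_C (r : ℚ) : s1 (C r) = C r := s1.commutes r
@[simp] lemma s0_C (r : ℚ) : s0 (C r) = C r := s0.commutes r
@[simp] lemma s1_3 : s1 3 = 3 := map_ofNat s1 3
@[simp] lemma s0_3 : s0 3 = 3 := map_ofNat s0 3
@[simp] lemma ev0_3 : ev0 3 = 3 := map_ofNat ev0 3

lemma s1_q : s1 qq = qq := by
  simp only [qq, map_add, map_mul, map_pow, s1_0, s1_1, s1_3]
  linear_combination (X 0 ^ 2 + 3 * X 1 ^ 2) * (2 * C 2⁻¹ + 1) * C_half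
lemma s0_q : s0 qq = qq := by simp [qq]
lemma s0_p : s0 pp = pp := by simp [pp]; ring
lemma s1_p : s1 pp = pp := by
  simp only [pp, map_add, map_sub, map_mul, map_pow, s1_0, s1_1, s1_3]
  have h : (2 * C 2⁻¹ : S3)^6 = 1 := by rw [C_half, one_pow]
  linear_combination ((X 0 * (3 * X 1 - X 0) * (3 * X 1 + X 0)) ^ 2) * h
lemma ev0_q : ev0 qq = 3 * X 1 ^ 2 := by simp [qq]

lemma s0_s0 : s0.comp s0 = AlgHom.id ℚ S3 := by
  ext i; fin_cases i <;> simp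
lemma s1_s1 : s1.comp s1 = AlgHom.id ℚ S3 := by
  apply MvPolynomial.algHom_ext
  intro i; fin_cases i
  · simp
    linear_combination X 0 * (2 * C 2⁻¹ + 1) * C_half
  · simp
    linear_combination X 1 * (2 * C 2⁻¹ + 1) * C_half
  · simp

noncomputable def neg2 : S3 →ₐ[ℚ] S3 := aeval ![-X 0, -X 1, X 2]
lemma cox : ((s1.comp s0).comp (s1.comp s0)).comp (s1.comp s0) = neg2 := by
  have h : (2 * C 2⁻¹ : S3)^3 = 1 := by rw [C_half, one_pow]
  apply MvPolynomial.algHom_ext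
  intro i; fin_cases i
  · simp [neg2]
    linear_combination X 0 * h
  · simp [neg2]
    linear_combination -X 1 * h
  · simp [neg2]

lemma coeff_scale (c : Fin 3 → ℚ) (f : S3) (d : Fin 3 →₀ ℕ) :
    coeff d (aeval (fun i => C (c i) * X i : Fin 3 → S3) f) = coeff d f * ∏ i, c i ^ d i := by
  induction f using MvPolynomial.induction_on' with
  | monomial e a =>
    have : aeval (fun i => C (c i) * X i : Fin 3 → S3) (monomial e a)
        = monomial e (a * ∏ i, c i ^ e i) := by
      rw [aeval_monomial, monomial_eq (s := e), Finsupp.prod_fintype _ _ (by simp),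
        Finsupp.prod_fintype _ _ (by simp)]
      simp only [mul_pow, Finset.prod_mul_distrib, C_mul, map_prod, C_pow, algebraMap_eq]
      ring
    rw [this, coeff_monomial, coeff_monomial]
    split_ifs with h
    · rw [h]
    · simp
  | add p q hp hq => simp only [map_add, coeff_add, hp, hq, add_mul]

lemma even0 (f : S3) (h : s0 f = f) (d : Fin 3 →₀ ℕ) (hd : coeff d f ≠ 0) : Even (d 0) := by
  have e : s0 = aeval (fun i => C ((![-1,1,1] : Fin 3 → ℚ) i) * X i : Fin 3 → S3) := by
    ext i; fin_cases i <;> simp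
  have := coeff_scale ![-1,1,1] f d
  rw [← e, h] at this
  simp [Fin.prod_univ_three] at this
  by_contra ho
  rw [Nat.not_even_iff_odd] at ho
  rw [ho.neg_one_pow] at this
  exact hd (by linarith)

lemma even1 (f : S3) (h0 : s0 f = f) (h1 : s1 f = f) (d : Fin 3 →₀ ℕ) (hd : coeff d f ≠ 0) :
    Even (d 1) := by
  have hn : neg2 f = f := by rw [← cox]; simp [h0, h1]
  have e : neg2.comp s0 = aeval (fun i => C ((![1,-1,1] : Fin 3 → ℚ) i) * X i : Fin 3 → S3) := by
    ext i; fin_cases i <;> simp [neg2]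
  have := coeff_scale ![1,-1,1] f d
  rw [← e, AlgHom.comp_apply, h0, hn] at this
  simp [Fin.prod_univ_three] at this
  by_contra ho
  rw [Nat.not_even_iff_odd] at ho
  rw [ho.neg_one_pow] at this
  exact hd (by linarith)

lemma X0_dvd_sub (f : S3) : X 0 ∣ f - ev0 f := by
  induction f using MvPolynomial.induction_on with
  | C a => simp [ev0]
  | add p q hp hq =>
    rw [map_add, add_sub_add_comm]; exact dvd_add hp hq
  | mul_X p i hp =>
    rw [map_mul]
    have : X 0 ∣ X i - ev0 (X i) := by fin_cases i <;> simp
    have e : p * X i - ev0 p * ev0 (X i) = (p - ev0 p) * X i + ev0 p * (X i - ev0 (X i)) := by ring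
    rw [e]
    exact dvd_add (hp.mul_right _) (this.mul_left _)

lemma X0_dvd (f : S3) (h : ev0 f = 0) : X 0 ∣ f := by simpa [h] using X0_dvd_sub f

noncomputable def e0 : S3 ≃ₐ[ℚ] S3 := AlgEquiv.ofAlgHom s0 s0 s0_s0 s0_s0
noncomputable def e1 : S3 ≃ₐ[ℚ] S3 := AlgEquiv.ofAlgHom s1 s1 s1_s1 s1_s1

lemma prime_s1 : Prime (s1 (X 0)) := (MulEquiv.prime_iff e1 (p := X 0)).2 (X_prime)
lemma prime_s0 : Prime (s0 (s1 (X 0))) := (MulEquiv.prime_iff e0 (p := s1 (X 0))).2 prime_s1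

lemma pdvd (g : S3) (h0 : s0 g = g) (h1 : s1 g = g) (h : ev0 g = 0) :
    ∃ k, g = pp * k := by
  have d0 : X 0 ^ 2 ∣ g := by
    obtain ⟨g1, rfl⟩ := X0_dvd g h
    have : s0 g1 = - g1 := by
      rw [map_mul, s0_0] at h0
      have : X 0 * (s0 g1 + g1) = 0 := by linear_combination -h0
      rcases mul_eq_zero.1 this with h | h
      · exact absurd h (X_ne_zero 0)
      · exact eq_neg_of_add_eq_zero_left h
    have c : ev0.comp s0 = ev0 := by ext i; fin_cases i <;> simp
    have : ev0 g1 = 0 := by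
      have h2 := congrArg ev0 this
      rw [← AlgHom.comp_apply, c, map_neg] at h2
      exact self_eq_neg.1 h2
    rw [sq]
    exact mul_dvd_mul_left _ (X0_dvd _ this)
  have d1 : s1 (X 0) ^ 2 ∣ g := by
    have := map_dvd s1 d0
    rwa [map_pow, h1] at this
  have d2 : s0 (s1 (X 0)) ^ 2 ∣ g := by
    have := map_dvd s0 d1
    rwa [map_pow, h0] at this
  have key : ∀ (a b : S3), (∃ v : Fin 3 → ℚ, eval v a = 0 ∧ eval v b ≠ 0) → ¬ a ∣ b := by
    rintro a b ⟨v, h1, h2⟩ ⟨c, rfl⟩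
    simp [h1] at h2
  obtain ⟨g2, rfl⟩ := d0
  have d1' := prime_s1.pow_dvd_of_dvd_mul_left 2 (fun hh => by
    refine key _ _ ⟨![3,1,0], ?_, ?_⟩ (prime_s1.dvd_of_dvd_pow hh) <;> simp) d1
  obtain ⟨g3, rfl⟩ := d1'
  rw [← mul_assoc] at d2
  have d2' := prime_s0.pow_dvd_of_dvd_mul_left 2 (fun hh => by
    refine key _ _ ⟨![-3,1,0], ?_, ?_⟩ hh <;> simp) d2
  obtain ⟨k, rfl⟩ := d2'
  refine ⟨C 2⁻¹^4 * k, ?_⟩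
  simp [pp]
  ring

noncomputable def bas (x : ℕ × ℕ × ℕ) : S3 := X 2 ^ x.1 * qq ^ x.2.1 * pp ^ x.2.2

lemma isHom3 : (3 : S3).IsHomogeneous 0 := by
  rw [show (3 : S3) = C 3 from (map_ofNat C 3).symm]; exact isHomogeneous_C _ _

lemma hom_q : qq.IsHomogeneous 2 := by
  have := isHom3.mul (isHomogeneous_X_pow (R := ℚ) (1 : Fin 3) 2)
  exact (isHomogeneous_X_pow _ _).add (by simpa using this)

lemma hom_p : pp.IsHomogeneous 6 := by
  have h3 : (3 * X 1 : S3).IsHomogeneous 1 := by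
    simpa using isHom3.mul (isHomogeneous_X ℚ (1 : Fin 3))
  have h0 := isHomogeneous_X ℚ (0 : Fin 3)
  exact ((h0.mul (h3.sub h0)).mul (h3.add h0)).pow 2

lemma hom_bas (x : ℕ × ℕ × ℕ) : (bas x).IsHomogeneous (x.1 + 2 * x.2.1 + 6 * x.2.2) :=
  ((isHomogeneous_X_pow _ _).mul (hom_q.pow _)).mul (hom_p.pow _)

lemma s0_bas (x) : s0 (bas x) = bas x := by simp [bas, s0_q, s0_p]
lemma s1_bas (x) : s1 (bas x) = bas x := by simp [bas, s1_q, s1_p]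

/-- The index set in degree `n`. -/
def Idx (n : ℕ) : Set (ℕ × ℕ × ℕ) := {x | x.1 + 2 * x.2.1 + 6 * x.2.2 = n}

lemma span_inv (n : ℕ) (f : S3) (hf : f ∈ Submodule.span ℚ (bas '' Idx n)) :
    f.IsHomogeneous n ∧ s0 f = f ∧ s1 f = f := by
  induction hf using Submodule.span_induction with
  | mem x h =>
    obtain ⟨y, hy, rfl⟩ := h
    exact ⟨hy ▸ hom_bas y, s0_bas y, s1_bas y⟩
  | zero => exact ⟨isHomogeneous_zero _ _ _, map_zero _, map_zero _⟩
  | add x y _ _ hx hy =>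
    exact ⟨hx.1.add hy.1, by rw [map_add, hx.2.1, hy.2.1], by rw [map_add, hx.2.2, hy.2.2]⟩
  | smul a x _ hx =>
    exact ⟨(homogeneousSubmodule (Fin 3) ℚ n).smul_mem a hx.1, by rw [map_smul, hx.2.1],
      by rw [map_smul, hx.2.2]⟩

lemma exists_h (n : ℕ) (f : S3) (hf : f.IsHomogeneous n) (h0 : s0 f = f) (h1 : s1 f = f) :
    ∃ h ∈ Submodule.span ℚ (bas '' Idx n), ev0 h = ev0 f := by
  refine ⟨∑ d ∈ f.support, if d 0 = 0 then (coeff d f * (3⁻¹) ^ (d 1 / 2)) • bas (d 2, d 1 / 2, 0)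
    else 0, ?_, ?_⟩
  · refine Submodule.sum_mem _ fun d hd => ?_
    split_ifs with hz
    · refine Submodule.smul_mem _ _ (Submodule.subset_span ⟨_, ?_, rfl⟩)
      have hd' := mem_support_iff.1 hd
      have h2 := hf hd'
      rw [Finsupp.weight_apply, Finsupp.sum_fintype _ _ (by simp)] at h2
      simp [Fin.sum_univ_three] at h2
      obtain ⟨m, hm⟩ := even1 f h0 h1 d hd'
      simp only [Idx, Set.mem_ofPred_eq]
      omega
    · exact zero_mem _
  · conv_rhs => rw [f.as_sum]
    rw [map_sum, map_sum]
    refine Finset.sum_congr rfl fun d hd => ?_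
    have hd' := mem_support_iff.1 hd
    obtain ⟨m, hm⟩ := even1 f h0 h1 d hd'
    have hm2 : d 1 / 2 = m := by omega
    have e : ev0 (monomial d (coeff d f)) = C (coeff d f) * (0 ^ d 0 * X 1 ^ d 1 * X 2 ^ d 2) := by
      rw [ev0, aeval_monomial, Finsupp.prod_fintype _ _ (by simp)]
      simp [Fin.prod_univ_three]
    rw [e]
    split_ifs with hz
    · rw [map_smul, hz, hm2, hm, smul_eq_C_mul]
      have h3 : (C (3⁻¹ ^ m) * 3 ^ m : S3) = 1 := by
        rw [show (3 : S3) = C 3 from (map_ofNat C 3).symm, ← C_pow, ← C_mul, ← mul_pow]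
        norm_num
      simp only [bas, map_mul, map_pow, ev0_q, ev0_2, pow_zero, mul_one, mul_pow]
      rw [C_pow] at h3
      linear_combination (C (coeff d f) * X 1 ^ (2 * m) * X 2 ^ d 2) * h3
    · simp [hz]

lemma hom_quot (n : ℕ) (g k : S3) (hg : g.IsHomogeneous n) (e : g = pp * k) (h : g ≠ 0) :
    6 ≤ n ∧ k.IsHomogeneous (n - 6) := by
  letI : GradedAlgebra (homogeneousSubmodule (Fin 3) ℚ) := MvPolynomial.gradedAlgebra
  have hg' : g ∈ homogeneousSubmodule (Fin 3) ℚ n := hg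
  have hp' : pp ∈ homogeneousSubmodule (Fin 3) ℚ 6 := hom_p
  have e1 := DirectSum.decompose_of_mem_same (homogeneousSubmodule (Fin 3) ℚ) hg'
  by_cases hn : 6 ≤ n
  · refine ⟨hn, ?_⟩
    have e2 := DirectSum.coe_decompose_mul_of_left_mem_of_le (homogeneousSubmodule (Fin 3) ℚ)
      (b := k) hp' hn
    rw [← e, e1] at e2
    rw [e] at e2 h
    have := mul_left_cancel₀ (left_ne_zero_of_mul h) e2
    rw [this]
    exact (DirectSum.decompose (homogeneousSubmodule (Fin 3) ℚ) k (n - 6)).2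
  · have e2 := DirectSum.coe_decompose_mul_of_left_mem_of_not_le (homogeneousSubmodule (Fin 3) ℚ)
      (b := k) hp' hn
    rw [← e, e1] at e2
    exact absurd e2 h

lemma mem_span (n : ℕ) : ∀ (f : S3) (_ : f.IsHomogeneous n) (_ : s0 f = f) (_ : s1 f = f),
    f ∈ Submodule.span ℚ (bas '' Idx n) := by
  induction n using Nat.strong_induction_on with
  | _ n ih =>
  intro f hf h0 h1
  obtain ⟨h, hh, he⟩ := exists_h n f hf h0 h1
  obtain ⟨hhom, hs0, hs1⟩ := span_inv n h hh
  have g0 : s0 (f - h) = f - h := by rw [map_sub, h0, hs0]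
  have g1 : s1 (f - h) = f - h := by rw [map_sub, h1, hs1]
  obtain ⟨k, hk⟩ := pdvd (f - h) g0 g1 (by rw [map_sub, he, sub_self])
  suffices f - h ∈ Submodule.span ℚ (bas '' Idx n) by simpa using add_mem this hh
  by_cases hz : f - h = 0
  · rw [hz]; exact zero_mem _
  obtain ⟨hn, hkh⟩ := hom_quot n _ k (hf.sub hhom) hk hz
  have hp0 : pp ≠ 0 := by rintro e; rw [e, zero_mul] at hk; exact hz hk
  rw [hk, map_mul, s0_p] at g0
  rw [hk, map_mul, s1_p] at g1
  have := ih (n - 6) (by omega) k hkh (mul_left_cancel₀ hp0 g0) (mul_left_cancel₀ hp0 g1)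
  rw [hk]
  clear hk hkh g0 g1
  induction this using Submodule.span_induction with
  | mem x h =>
    obtain ⟨y, hy, rfl⟩ := h
    refine Submodule.subset_span ⟨(y.1, y.2.1, y.2.2 + 1), ?_, ?_⟩
    · simp only [Idx, Set.mem_ofPred_eq] at hy ⊢; omega
    · simp only [bas]; ring
  | zero => simp
  | add x y _ _ hx hy => rw [mul_add]; exact add_mem hx hy
  | smul a x _ hx => rw [mul_smul_comm]; exact Submodule.smul_mem _ _ hx

lemma algInd : AlgebraicIndependent ℚ ![X 2, qq, pp] := by
  set B := Algebra.adjoin ℚ (Set.range ![X 2, qq, pp]) with hB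
  have hw : X 2 ∈ B := Algebra.subset_adjoin ⟨0, rfl⟩
  have hq : qq ∈ B := Algebra.subset_adjoin ⟨1, rfl⟩
  have hp : pp ∈ B := Algebra.subset_adjoin ⟨2, rfl⟩
  have am : ∀ b : B, IsAlgebraic B (b : S3) := fun b => isAlgebraic_algebraMap b
  have i0 : IsAlgebraic B (X 0 : S3) := by
    let P : Polynomial B := Polynomial.C 16 * Polynomial.X ^ 6
      - Polynomial.C (24 * ⟨qq, hq⟩) * Polynomial.X ^ 4
      + Polynomial.C (9 * ⟨qq, hq⟩ ^ 2) * Polynomial.X ^ 2 - Polynomial.C ⟨pp, hp⟩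
    refine ⟨P, fun h => ?_, ?_⟩
    · have := congrArg (fun p => Polynomial.coeff p 6) h
      simp [P, -map_mul, -map_pow, Polynomial.coeff_C_mul, Polynomial.coeff_X_pow] at this
    · have e : ∀ b : B, algebraMap B S3 b = (b : S3) := fun _ => rfl
      simp only [P, map_sub, map_add, map_mul, map_pow, Polynomial.aeval_C, Polynomial.aeval_X,
        e, map_ofNat]
      simp only [qq, pp]
      ring
  have ic : ∀ r : ℚ, IsAlgebraic B (C r : S3) := fun r => am (algebraMap ℚ B r)
  have i1 : IsAlgebraic B (X 1 : S3) := by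
    refine IsAlgebraic.of_pow (n := 2) (by norm_num) ?_
    have h3 : (C 3⁻¹ * 3 : S3) = 1 := by
      rw [show (3 : S3) = C 3 from (map_ofNat C 3).symm, ← C_mul]; norm_num
    have e : (X 1 ^ 2 : S3) = C 3⁻¹ * (qq - X 0 ^ 2) := by
      simp only [qq]; linear_combination -X 1 ^ 2 * h3
    rw [e]
    exact (ic _).mul ((am ⟨qq, hq⟩).sub (i0.pow 2))
  have i2 : IsAlgebraic B (X 2 : S3) := am ⟨_, hw⟩
  have : Algebra.IsAlgebraic B S3 := ⟨fun f => by
    induction f using MvPolynomial.induction_on with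
    | C a => exact ic a
    | add p q hp hq => exact hp.add hq
    | mul_X p i hp => exact hp.mul (by fin_cases i <;> assumption)⟩
  refine (Algebra.IsAlgebraic.isTranscendenceBasis_of_le_trdeg_of_finite ℚ _ ?_).1
  rw [MvPolynomial.trdeg_of_isDomain]
  simp

lemma linInd : LinearIndependent ℚ bas := by
  have h := (algebraicIndependent_iff_injective_aeval.1 algInd)
  have hb := (basisMonomials (Fin 3) ℚ).linearIndependent
  have h2 := hb.map' (aeval ![X 2, qq, pp] : S3 →ₐ[ℚ] S3).toLinearMap (LinearMap.ker_eq_bot.2 h)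
  have h3 := h2.comp (fun x : ℕ × ℕ × ℕ => Finsupp.equivFunOnFinite.symm ![x.1, x.2.1, x.2.2]) (by
    rintro ⟨a, b, c⟩ ⟨a', b', c'⟩ e
    have e := Finsupp.equivFunOnFinite.symm.injective e
    simpa using e)
  have e : bas = ((aeval ![X 2, qq, pp] : S3 →ₐ[ℚ] S3).toLinearMap ∘ basisMonomials (Fin 3) ℚ) ∘
      fun x : ℕ × ℕ × ℕ => Finsupp.equivFunOnFinite.symm ![x.1, x.2.1, x.2.2] := by
    funext x
    simp only [Function.comp, coe_basisMonomials, AlgHom.toLinearMap_apply, aeval_monomial]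
    rw [Finsupp.prod_fintype _ _ (by simp)]
    simp [Fin.prod_univ_three, bas]
  rw [e]; exact h3

noncomputable def phi : S3 →ₐ[ℚ] S3 :=
  aeval ![2 * X 0 - 3 * X 1 - 2 * X 2, X 1 - 10 * X 2, X 2]
noncomputable def psi : S3 →ₐ[ℚ] S3 :=
  aeval ![C 2⁻¹ * (X 0 + 3 * X 1 + 32 * X 2), X 1 + 10 * X 2, X 2]

lemma phi_0 : phi (X 0) = 2 * X 0 - 3 * X 1 - 2 * X 2 := by simp [phi]
lemma phi_1 : phi (X 1) = X 1 - 10 * X 2 := by simp [phi]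
lemma phi_2 : phi (X 2) = X 2 := by simp [phi]
lemma phi_C (r : ℚ) : phi (C r) = C r := phi.commutes r
lemma phi_n3 : phi 3 = 3 := map_ofNat (phi) 3
lemma phi_n10 : phi 10 = 10 := map_ofNat (phi) 10
lemma phi_n32 : phi 32 = 32 := map_ofNat (phi) 32
lemma psi_0 : psi (X 0) = C 2⁻¹ * (X 0 + 3 * X 1 + 32 * X 2) := by simp [psi]
lemma psi_1 : psi (X 1) = X 1 + 10 * X 2 := by simp [psi]
lemma psi_2 : psi (X 2) = X 2 := by simp [psi]
lemma psi_n2 : psi 2 = 2 := map_ofNat (psi) 2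
lemma psi_n3 : psi 3 = 3 := map_ofNat (psi) 3
lemma psi_n10 : psi 10 = 10 := map_ofNat (psi) 10

lemma phi_psi : phi.comp psi = AlgHom.id ℚ S3 := by
  apply MvPolynomial.algHom_ext
  intro i; fin_cases i
  · simp [psi_0, phi_0, phi_1, phi_2, phi_C, phi_n3, phi_n10, phi_n32]
    linear_combination X 0 * C_half
  · simp [psi_1, phi_1, phi_2, phi_n3, phi_n10, phi_n32]
  · simp [psi_2, phi_2]

lemma psi_phi : psi.comp phi = AlgHom.id ℚ S3 := by
  apply MvPolynomial.algHom_ext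
  intro i; fin_cases i
  · simp [phi_0, psi_0, psi_1, psi_2, psi_n2, psi_n3, psi_n10]
    linear_combination (X 0 + 3 * X 1 + 32 * X 2) * C_half
  · simp [phi_1, psi_1, psi_2, psi_n2, psi_n3, psi_n10]
  · simp [phi_2, psi_2]

noncomputable def ephi : S3 ≃ₐ[ℚ] S3 := AlgEquiv.ofAlgHom phi psi phi_psi psi_phi

lemma homC (a : ℕ) [a.AtLeastTwo] (i : Fin 3) : (OfNat.ofNat a * X i : S3).IsHomogeneous 1 := by
  rw [show (OfNat.ofNat a : S3) = C (OfNat.ofNat a) from (map_ofNat C a).symm]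
  exact isHomogeneous_C_mul_X _ _

lemma phi_hom (n : ℕ) (f : S3) (h : f.IsHomogeneous n) : (phi f).IsHomogeneous n := by
  rw [← one_mul n]
  refine h.aeval _ fun i => ?_
  fin_cases i
  · exact ((homC 2 0).sub (homC 3 1)).sub (homC 2 2)
  · exact (isHomogeneous_X _ _).sub (homC 10 2)
  · exact isHomogeneous_X _ _

lemma psi_hom (n : ℕ) (f : S3) (h : f.IsHomogeneous n) : (psi f).IsHomogeneous n := by
  rw [← one_mul n]
  refine h.aeval _ fun i => ?_
  fin_cases i
  · exact (((isHomogeneous_X _ _).add (homC 3 1)).add (homC 32 2)).C_mul _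
  · exact (isHomogeneous_X _ _).add (homC 10 2)
  · exact isHomogeneous_X _ _

lemma sig_n2 (j : Fin 3) : cartanSigma Amat ℚ j 2 = 2 := map_ofNat _ 2
lemma sig_n3 (j : Fin 3) : cartanSigma Amat ℚ j 3 = 3 := map_ofNat _ 3
lemma sig_n10 (j : Fin 3) : cartanSigma Amat ℚ j 10 = 10 := map_ofNat _ 10
lemma sig_ne (j i : Fin 3) (h : i ≠ j) : cartanSigma Amat ℚ j (X i) = X i := by
  simp [cartanSigma, h]
lemma sig0 : cartanSigma Amat ℚ 0 (X 0) = - X 0 + 3 * X 1 + 2 * X 2 := by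
  simp [cartanSigma, cartanAlpha, Fin.sum_univ_three, Amat]; ring
lemma sig1 : cartanSigma Amat ℚ 1 (X 1) = X 0 - X 1 + 4 * X 2 := by
  simp [cartanSigma, cartanAlpha, Fin.sum_univ_three, Amat]; ring

lemma comm0 : (cartanSigma Amat ℚ 0).comp phi = phi.comp s0 := by
  have h1 := sig_ne 0 1 (by decide)
  have h2 := sig_ne 0 2 (by decide)
  apply MvPolynomial.algHom_ext
  intro i; fin_cases i
  · simp [phi_0, sig0, h1, h2, sig_n2, sig_n3, sig_n10]; ring
  · simp [phi_1, h1, h2, sig_n2, sig_n3, sig_n10]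
  · simp [phi_2, h2]

lemma comm1 : (cartanSigma Amat ℚ 1).comp phi = phi.comp s1 := by
  have h1 := sig_ne 1 0 (by decide)
  have h2 := sig_ne 1 2 (by decide)
  apply MvPolynomial.algHom_ext
  intro i; fin_cases i
  · simp [phi_0, phi_1, phi_C, phi_n3, phi_n10, phi_n32, sig1, h1, h2, sig_n2, sig_n3, sig_n10]
    linear_combination (X 0 - 3 * X 1 + 14 * X 2) * C_half
  · simp [phi_0, phi_1, phi_C, sig1, h1, h2, sig_n2, sig_n3, sig_n10]
    linear_combination -(X 0 - X 1 - 6 * X 2) * C_half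
  · simp [phi_2, h2]

/-- For the stated Cartan matrix `A`, the homogeneous component of polynomial
degree `n` of the subalgebra of `ℚ[ω₁,ω₂,ω₃]` fixed by both `σ₁` and `σ₂` has
dimension the number of triples `(a,b,c)` of nonnegative integers with
`a + 2b + 6c = n`; i.e. its Hilbert series is `1/((1−t)(1−t²)(1−t⁶))`. -/
theorem hilbert_series_P12_G2 (n : ℕ) :
    Module.finrank ℚ
      ↥(homogeneousSubmodule (Fin 3) ℚ n ⊓ fixedSubmodule Amat ℚ 0 ⊓
          fixedSubmodule Amat ℚ 1) =
      Nat.card {x : ℕ × ℕ × ℕ // x.1 + 2 * x.2.1 + 6 * x.2.2 = n} := by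
  have key : homogeneousSubmodule (Fin 3) ℚ n ⊓ fixedSubmodule Amat ℚ 0 ⊓
      fixedSubmodule Amat ℚ 1 =
      (Submodule.span ℚ (bas '' Idx n)).map (ephi.toLinearEquiv : S3 →ₗ[ℚ] S3) := by
    ext f
    have m : ∀ j, f ∈ fixedSubmodule Amat ℚ j ↔ cartanSigma Amat ℚ j f = f := by
      intro j
      simp [fixedSubmodule, sub_eq_zero]
    have c0 : ∀ g, cartanSigma Amat ℚ 0 (phi g) = phi (s0 g) := fun g => DFunLike.congr_fun comm0 g
    have c1 : ∀ g, cartanSigma Amat ℚ 1 (phi g) = phi (s1 g) := fun g => DFunLike.congr_fun comm1 g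
    have inj : Function.Injective phi := ephi.injective
    rw [Submodule.mem_inf, Submodule.mem_inf, m, m, Submodule.mem_map, mem_homogeneousSubmodule]
    constructor
    · rintro ⟨⟨h, h0⟩, h1⟩
      have hf : phi (psi f) = f := DFunLike.congr_fun phi_psi f
      refine ⟨psi f, mem_span n _ (psi_hom n f h) (inj ?_) (inj ?_), hf⟩
      · rw [← c0, hf, h0]
      · rw [← c1, hf, h1]
    · rintro ⟨g, hg, rfl⟩
      obtain ⟨h, h0, h1⟩ := span_inv n g hg
      refine ⟨⟨phi_hom n g h, ?_⟩, ?_⟩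
      · exact (c0 g).trans (by rw [h0]; rfl)
      · exact (c1 g).trans (by rw [h1]; rfl)
  rw [key, LinearEquiv.finrank_map_eq]
  have hfin : Finite (Idx n) := by
    refine Set.Finite.subset ((Set.finite_Iic n).prod ((Set.finite_Iic n).prod (Set.finite_Iic n))) ?_
    rintro ⟨a, b, c⟩ h
    simp only [Idx, Set.mem_ofPred_eq] at h
    simp only [Set.mem_prod, Set.mem_Iic]
    omega
  have : Fintype (Idx n) := Fintype.ofFinite _
  have li : LinearIndependent ℚ (fun x : Idx n => bas x) := linInd.comp _ Subtype.val_injective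
  have := finrank_span_eq_card li
  rw [Set.image_eq_range, this, ← Nat.card_eq_fintype_card]
  rfl
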